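/- Let A be an integrally closed residuated lattice and write ~a := a\e (= e/a). Then for all a, b ∈ A: if a·(~a)·b ≤ e, then b ≤ e; and likewise if b·(~a)·a ≤ e, then b ≤ e. -/

import Mathlib

/-- A residuated lattice: a lattice-ordered monoid with left and right residuals,
i.e. `b ≤ a\c ↔ a*b ≤ c ↔ a ≤ c/b`.  `ldiv a c` denotes `a\c` and `rdiv c b` denotes `c/b`. -/
class ResiduatedLattice (α : Type*) extends Lattice α, Monoid α where
  ldiv : α → α → α
  rdiv : α → α → α
  le_ldiv_iff : ∀ a b c : α, b ≤ ldiv a c ↔ a * b ≤ c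
  le_rdiv_iff : ∀ a b c : α, a ≤ rdiv c b ↔ a * b ≤ c

open ResiduatedLattice

/-!
Since `~a` is the largest `x` with `a * x ≤ 1`, the inequality `a * ~a * b ≤ 1` says `~a * b ≤ ~a`,
and integral closedness cancels `~a`. The mirror image reduces to the same argument because
`x * a ≤ 1` gives `a * x * a ≤ a`, hence `a * x ≤ 1`: thus `b * ~a * a ≤ 1` yields
`a * (b * ~a) ≤ 1`, that is, `b * ~a ≤ ~a`.
-/

section OrderedMonoid

variable {α : Type*} [Monoid α] [LE α]

variable (α) in
/-- Left integral closedness of an ordered monoid. It is phrased without residuals, so that they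
need not exist; when they do, it says that `a \ a = 1` for all `a`. -/
def LeftIntegrallyClosed : Prop :=
  ∀ ⦃x y : α⦄, x * y ≤ x → y ≤ 1

variable (α) in
/-- Right integral closedness of an ordered monoid. It is phrased without residuals, so that they
need not exist; when they do, it says that `a / a = 1` for all `a`. -/
def RightIntegrallyClosed : Prop :=
  ∀ ⦃x y : α⦄, y * x ≤ x → y ≤ 1

theorem RightIntegrallyClosed.mul_le_one_comm [MulLeftMono α] (hr : RightIntegrallyClosed α)
    {a b : α} : a * b ≤ 1 ↔ b * a ≤ 1 := by
  have swap {x y : α} (h : x * y ≤ 1) : y * x ≤ 1 := by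
    apply hr (x := y)
    calc y * x * y = y * (x * y) := mul_assoc y x y
      _ ≤ y * 1 := mul_le_mul_right h y
      _ = y := mul_one y
  exact ⟨swap, swap⟩

theorem LeftIntegrallyClosed.le_one_of_mul_mul_le_one (hl : LeftIntegrallyClosed α) {a b c : α}
    (hc : c ∈ upperBounds {x | a * x ≤ 1}) (h : a * c * b ≤ 1) : b ≤ 1 := by
  rw [mul_assoc] at h
  have hcb : c * b ≤ c := hc h
  exact hl hcb

theorem RightIntegrallyClosed.le_one_of_mul_mul_le_one [MulLeftMono α]
    (hr : RightIntegrallyClosed α) {a b c : α} (hc : c ∈ upperBounds {x | a * x ≤ 1})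
    (h : b * c * a ≤ 1) : b ≤ 1 := by
  have hbc : b * c ≤ c := hc (hr.mul_le_one_comm.1 h)
  exact hr hbc

theorem quasi_weakening_of_integrally_closed_general [MulLeftMono α]
    (hl : LeftIntegrallyClosed α) (hr : RightIntegrallyClosed α) {a c : α}
    (hc : c ∈ upperBounds {x | a * x ≤ 1}) (b : α) :
    (a * c * b ≤ 1 → b ≤ 1) ∧ (b * c * a ≤ 1 → b ≤ 1) :=
  ⟨hl.le_one_of_mul_mul_le_one hc, hr.le_one_of_mul_mul_le_one hc⟩

end OrderedMonoid

namespace ResiduatedLattice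

variable {α : Type*} [ResiduatedLattice α]

theorem gc_mul_ldiv (a : α) : GaloisConnection (a * ·) (ldiv a) :=
  fun b c => (le_ldiv_iff a b c).symm

theorem gc_mul_rdiv (b : α) : GaloisConnection (· * b) (rdiv · b) :=
  fun a c => (le_rdiv_iff a b c).symm

instance : MulLeftMono α :=
  ⟨fun a _ _ h => (gc_mul_ldiv a).monotone_l h⟩

theorem leftIntegrallyClosed_iff : LeftIntegrallyClosed α ↔ ∀ a : α, ldiv a a = 1 where
  mp hl a := le_antisymm (hl ((gc_mul_ldiv a).l_u_le a)) ((gc_mul_ldiv a).le_u (mul_one a).le)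
  mpr h x _ hxy := h x ▸ (gc_mul_ldiv x).le_u hxy

theorem rightIntegrallyClosed_iff : RightIntegrallyClosed α ↔ ∀ a : α, rdiv a a = 1 where
  mp hr a := le_antisymm (hr ((gc_mul_rdiv a).l_u_le a)) ((gc_mul_rdiv a).le_u (one_mul a).le)
  mpr h x _ hxy := h x ▸ (gc_mul_rdiv x).le_u hxy

end ResiduatedLattice

/-- In any integrally closed residuated lattice: `a·(~a)·b ≤ e` implies `b ≤ e`,
and `b·(~a)·a ≤ e` implies `b ≤ e`, where `~a := a\e = e/a`. -/
theorem quasi_weakening_of_integrally_closed {α : Type*} [ResiduatedLattice α]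
    (hic : ∀ a : α, ldiv a a = 1 ∧ rdiv a a = 1) :
    ∀ a b : α, (a * ldiv a 1 * b ≤ 1 → b ≤ 1) ∧ (b * ldiv a 1 * a ≤ 1 → b ≤ 1) := by
  have hl : LeftIntegrallyClosed α := leftIntegrallyClosed_iff.2 fun a => (hic a).1
  have hr : RightIntegrallyClosed α := rightIntegrallyClosed_iff.2 fun a => (hic a).2
  exact fun a => quasi_weakening_of_integrally_closed_general hl hr (gc_mul_ldiv a).isGreatest_u.2
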